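/- Finiteness of the representing machine: let S = (Rules_1, Rules_2, Initials) be a system of propositional executable logic in which Rules_1 and Rules_2 are finite sets of action rules, and let I = (s1(0), ∅, p(0), ∅, s2(0)) ∈ Initials have finite components s1(0), p(0), s2(0). Then every literal occurring in s_x(n) or p(n) for any execution e generated by S with e(0) = I and any n ≤ t lies in the finite set consisting of the literals of s1(0) ∪ p(0) ∪ s2(0) together with the literals α such that ⊕α or ⊞α occurs in the head of some rule in Rules_1 ∪ Rules_2; consequently the set of tuples {(y, s1(n), p(n), s2(n)) | e generated by S, e(0) = I, n ≤ t} (the state set of the machine representing S for I) is finite. -/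

import Mathlib

universe u

/-- A literal over a set of atoms: an atom or a negated atom. -/
inductive Lit (At : Type u) : Type u
  | pos (a : At)
  | neg (a : At)

/-- Propositional formulae over the atoms (whose literals are the
atoms and negated atoms), built with negation, conjunction and disjunction. -/
inductive PForm (At : Type u) : Type u
  | atom (a : At)
  | not (φ : PForm At)
  | and (φ ψ : PForm At)
  | or (φ ψ : PForm At)

/-- Satisfaction of a literal by a (classical) valuation. -/
def Lit.sat {At : Type u} (v : At → Prop) : Lit At → Prop
  | .pos a => v a
  | .neg a => ¬ v a

/-- Classical satisfaction of a propositional formula by a valuation. -/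
def PForm.sat {At : Type u} (v : At → Prop) : PForm At → Prop
  | .atom a => v a
  | .not φ => ¬ φ.sat v
  | .and φ ψ => φ.sat v ∧ ψ.sat v
  | .or φ ψ => φ.sat v ∨ ψ.sat v

/-- Classical propositional entailment of a formula from a set of literals. -/
def Entails {At : Type u} (Γ : Set (Lit At)) (φ : PForm At) : Prop :=
  ∀ v : At → Prop, (∀ l ∈ Γ, l.sat v) → φ.sat v

/-- Action units: ⊕α (add to own next private state), ⊖α (delete from own next
private state), ⊞α (add to next public state), ⊟α (delete from next public state). -/
inductive ActionUnit (At : Type u) : Type u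
  | addPriv (α : Lit At)  -- ⊕α
  | delPriv (α : Lit At)  -- ⊖α
  | addPub (α : Lit At)   -- ⊞α
  | delPub (α : Lit At)   -- ⊟α

/-- Action formulae: built from action units by conjunction and disjunction. -/
inductive AForm (At : Type u) : Type u
  | unit (u : ActionUnit At)
  | and (φ ψ : AForm At)
  | or (φ ψ : AForm At)

/-- A set of action units satisfies an action formula. -/
def AForm.sat {At : Type u} (A : Set (ActionUnit At)) : AForm At → Prop
  | .unit u => u ∈ A
  | .and φ ψ => φ.sat A ∧ ψ.sat A
  | .or φ ψ => φ.sat A ∨ ψ.sat A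

/-- `A` minimally satisfies `ψ`: it satisfies `ψ` and no proper subset does. -/
def MinSat {At : Type u} (A : Set (ActionUnit At)) (ψ : AForm At) : Prop :=
  ψ.sat A ∧ ∀ B : Set (ActionUnit At), B ⊂ A → ¬ ψ.sat B

/-- An action rule φ ⇒ ψ. -/
structure ActionRule (At : Type u) : Type u where
  cond : PForm At
  head : AForm At

/-- An execution state (s1, a1, p, a2, s2). -/
abbrev ExecState (At : Type u) : Type u :=
  Set (Lit At) × Set (ActionUnit At) × Set (Lit At) × Set (ActionUnit At) × Set (Lit At)

/-- An execution e = (s1, a1, p, a2, s2, t), with a1(0) = a2(0) = ∅. -/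
structure Execution (At : Type u) : Type u where
  s1 : ℕ → Set (Lit At)
  a1 : ℕ → Set (ActionUnit At)
  p : ℕ → Set (Lit At)
  a2 : ℕ → Set (ActionUnit At)
  s2 : ℕ → Set (Lit At)
  t : ℕ∞
  a1_zero : a1 0 = ∅
  a2_zero : a2 0 = ∅

/-- a(n) = a1(n) ∪ a2(n). -/
def Execution.a {At : Type u} (e : Execution At) (n : ℕ) : Set (ActionUnit At) :=
  e.a1 n ∪ e.a2 n

/-- e(n) = (s1(n), a1(n), p(n), a2(n), s2(n)). -/
def Execution.state {At : Type u} (e : Execution At) (n : ℕ) : ExecState At :=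
  (e.s1 n, e.a1 n, e.p n, e.a2 n, e.s2 n)

/-- The execution is propagated. -/
def Execution.Propagated {At : Type u} (e : Execution At) : Prop :=
  ∀ n : ℕ, (n : ℕ∞) < e.t →
    e.s1 (n+1) = (e.s1 n \ {α | ActionUnit.delPriv α ∈ e.a1 n}) ∪
        {α | ActionUnit.addPriv α ∈ e.a1 n} ∧
    e.s2 (n+1) = (e.s2 n \ {α | ActionUnit.delPriv α ∈ e.a2 n}) ∪
        {α | ActionUnit.addPriv α ∈ e.a2 n} ∧
    e.p (n+1) = (e.p n \ {α | ActionUnit.delPub α ∈ e.a n}) ∪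
        {α | ActionUnit.addPub α ∈ e.a n}

/-- The execution is finitely engaged. -/
def Execution.FinitelyEngaged {At : Type u} (e : Execution At) : Prop :=
  ∃ T : ℕ, e.t = (T : ℕ∞) ∧
    (∀ n : ℕ, 1 ≤ n → n ≤ T - 2 → e.a n = ∅ → e.a (n+1) ≠ ∅) ∧
    e.a (T - 1) = ∅ ∧ e.a T = ∅

/-- The execution is infinitely engaged. -/
def Execution.InfinitelyEngaged {At : Type u} (e : Execution At) : Prop :=
  e.t = ⊤ ∧ ∀ n : ℕ, e.a n = ∅ → e.a (n+1) ≠ ∅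

/-- A system S = (Rules₁, Rules₂, Initials). -/
structure System (At : Type u) : Type u where
  rules1 : Set (ActionRule At)
  rules2 : Set (ActionRule At)
  initials : Set (ExecState At)

/-- The system S generates the execution e. -/
def System.Generates {At : Type u} (S : System At) (e : Execution At) : Prop :=
  e.Propagated ∧ (e.FinitelyEngaged ∨ e.InfinitelyEngaged) ∧
  e.state 0 ∈ S.initials ∧
  ∀ m : ℕ, 1 ≤ m → (m : ℕ∞) < e.t →
    (Odd m → e.a2 m = ∅ ∧ (e.a1 m = ∅ ∨ ∃ r ∈ S.rules1,
      Entails (e.s1 m ∪ e.p m) r.cond ∧ MinSat (e.a1 m) r.head)) ∧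
    (Even m → e.a1 m = ∅ ∧ (e.a2 m = ∅ ∨ ∃ r ∈ S.rules2,
      Entails (e.s2 m ∪ e.p m) r.cond ∧ MinSat (e.a2 m) r.head))

/-- A state of the finite state machine: (y, s1, p, s2). -/
abbrev FSMState (At : Type u) : Type u :=
  ℕ × Set (Lit At) × Set (Lit At) × Set (Lit At)

/-- A letter of the alphabet: a pair (a1, a2) of sets of action units. -/
abbrev FSMLabel (At : Type u) : Type u :=
  Set (ActionUnit At) × Set (ActionUnit At)

/-- A finite state machine M = (States, Trans, Start, Term, Alphabet). -/
structure FSM (At : Type u) : Type u where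
  States : Set (FSMState At)
  Trans : Set (FSMState At × FSMLabel At × FSMState At)
  Start : FSMState At
  Term : Set (FSMState At)
  Alphabet : Set (FSMLabel At)

/-- The first component of a machine state for time `n` in an execution with
terminal time `t`: 0 if n = t, 1 if n < t and n odd, 2 if n < t and n even. -/
noncomputable def ylabel (t : ℕ∞) (n : ℕ) : ℕ :=
  if (n : ℕ∞) = t then 0 else if Odd n then 1 else 2

/-- The machine state corresponding to step `n` of an execution. -/
noncomputable def Execution.fsmState {At : Type u} (e : Execution At) (n : ℕ) : FSMState At :=
  (ylabel e.t n, e.s1 n, e.p n, e.s2 n)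

/-- First component of the target of a transition leaving step `n`:
0 if n+1 = t, otherwise 1 if n is odd and 2 if n is even. -/
noncomputable def ytrans (t : ℕ∞) (n : ℕ) : ℕ :=
  if ((n : ℕ∞) + 1) = t then 0 else if Odd n then 1 else 2

/-- M represents the system S for the initial state I. -/
noncomputable def Represents {At : Type u} (M : FSM At) (S : System At) (I : ExecState At) : Prop :=
  M.States = {σ | ∃ e : Execution At, S.Generates e ∧ e.state 0 = I ∧
      ∃ n : ℕ, (n : ℕ∞) ≤ e.t ∧ σ = e.fsmState n} ∧
  M.Term = {σ ∈ M.States | σ.1 = 0} ∧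
  M.Alphabet = {τ | ∃ e : Execution At, S.Generates e ∧ e.state 0 = I ∧
      ∃ n : ℕ, (n : ℕ∞) ≤ e.t ∧ τ = (e.a1 n, e.a2 n)} ∧
  M.Start = (1, I.1, I.2.2.1, I.2.2.2.2) ∧
  M.Trans = {tr | ∃ e : Execution At, S.Generates e ∧ e.state 0 = I ∧
      ∃ n : ℕ, (n : ℕ∞) < e.t ∧
        tr = (((if Odd n then 1 else 2 : ℕ), e.s1 n, e.p n, e.s2 n),
              (e.a1 n, e.a2 n),
              (ytrans e.t n, e.s1 (n+1), e.p (n+1), e.s2 (n+1)))}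

/-- The action units occurring in an action formula. -/
def AForm.units {At : Type u} : AForm At → Set (ActionUnit At)
  | .unit u => {u}
  | .and φ ψ => φ.units ∪ ψ.units
  | .or φ ψ => φ.units ∪ ψ.units

/-!
A minimal set satisfying an action formula contains only units occurring in that formula, since any
other unit could be discarded. Hence the units performed during a generated execution all occur in
rule heads, and a literal enters a state only by being initial or by being added in some head.
The rules have finitely many such literals, so the machine states range over triples of subsets of a
fixed finite set, with three possible labels.
-/

section

variable {At : Type u}

theorem AForm.finite_units (ψ : AForm At) : ψ.units.Finite := by
  induction ψ with
  | unit u => exact Set.finite_singleton u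
  | and φ ψ ihφ ihψ | or φ ψ ihφ ihψ => exact ihφ.union ihψ

theorem AForm.sat_of_inter_units_subset {A B : Set (ActionUnit At)} {ψ : AForm At}
    (hψ : ψ.sat A) (hAB : A ∩ ψ.units ⊆ B) : ψ.sat B := by
  induction ψ with
  | unit u => exact hAB ⟨hψ, rfl⟩
  | and φ χ ihφ ihχ =>
    obtain ⟨hφ, hχ⟩ := Set.union_subset_iff.1 (Set.inter_union_distrib_left A _ _ ▸ hAB)
    exact hψ.imp (ihφ · hφ) (ihχ · hχ)
  | or φ χ ihφ ihχ =>
    obtain ⟨hφ, hχ⟩ := Set.union_subset_iff.1 (Set.inter_union_distrib_left A _ _ ▸ hAB)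
    exact hψ.imp (ihφ · hφ) (ihχ · hχ)

theorem MinSat.subset_units {A : Set (ActionUnit At)} {ψ : AForm At} (h : MinSat A ψ) :
    A ⊆ ψ.units := by
  by_contra hA
  exact h.2 (A ∩ ψ.units) (Set.inter_ssubset_left_iff.2 hA)
    (AForm.sat_of_inter_units_subset h.1 subset_rfl)

/-- The action units occurring in the head of some rule of `R`. -/
def headUnits (R : Set (ActionRule At)) : Set (ActionUnit At) :=
  ⋃ r ∈ R, r.head.units

theorem finite_headUnits {R : Set (ActionRule At)} (hR : R.Finite) : (headUnits R).Finite :=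
  hR.biUnion fun r _ => r.head.finite_units

theorem MinSat.subset_headUnits {A : Set (ActionUnit At)} {R : Set (ActionRule At)}
    {r : ActionRule At} (h : MinSat A r.head) (hr : r ∈ R) : A ⊆ headUnits R :=
  h.subset_units.trans (Set.subset_biUnion_of_mem (u := fun r : ActionRule At => r.head.units) hr)

/-- The literals that the action units in `A` add, whether to a private state (`⊕`) or to the public
one (`⊞`). -/
def addedLiterals (A : Set (ActionUnit At)) : Set (Lit At) :=
  {α | ActionUnit.addPriv α ∈ A ∨ ActionUnit.addPub α ∈ A}

theorem addedLiterals_mono {A B : Set (ActionUnit At)} (h : A ⊆ B) :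
    addedLiterals A ⊆ addedLiterals B :=
  fun _ => Or.imp (@h _) (@h _)

theorem finite_addedLiterals {A : Set (ActionUnit At)} (hA : A.Finite) :
    (addedLiterals A).Finite :=
  (hA.preimage fun _ _ _ _ => ActionUnit.addPriv.inj).union
    (hA.preimage fun _ _ _ _ => ActionUnit.addPub.inj)

theorem addedLiterals_headUnits (R : Set (ActionRule At)) :
    addedLiterals (headUnits R) =
      {α | ∃ r ∈ R, ActionUnit.addPriv α ∈ r.head.units ∨ ActionUnit.addPub α ∈ r.head.units} := by
  ext α
  simp only [addedLiterals, headUnits, Set.mem_iUnion₂, Set.mem_ofPred_eq, exists_prop, and_or_left,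
    exists_or]

theorem ylabel_le_two (t : ℕ∞) (n : ℕ) : ylabel t n ≤ 2 := by
  unfold ylabel
  split_ifs <;> omega

namespace Execution

/-- The literals occurring in one of the private states or in the public state at time `n`. -/
def literals (e : Execution At) (n : ℕ) : Set (Lit At) :=
  e.s1 n ∪ e.p n ∪ e.s2 n

theorem literals_eq_of_state_eq {e : Execution At} {n : ℕ} {s₁ p s₂ : Set (Lit At)}
    {a₁ a₂ : Set (ActionUnit At)} (h : e.state n = (s₁, a₁, p, a₂, s₂)) :
    e.literals n = s₁ ∪ p ∪ s₂ := by
  simp only [state, Prod.mk.injEq] at h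
  obtain ⟨hs₁, -, hp, -, hs₂⟩ := h
  rw [literals, hs₁, hp, hs₂]

theorem Propagated.literals_succ_subset {e : Execution At} (he : e.Propagated) {n : ℕ}
    (hn : (n : ℕ∞) < e.t) : e.literals (n + 1) ⊆ e.literals n ∪ addedLiterals (e.a n) := by
  obtain ⟨hs₁, hs₂, hp⟩ := he n hn
  rw [literals, hs₁, hp, hs₂]
  rintro α (((⟨hα, -⟩ | hα) | (⟨hα, -⟩ | hα)) | (⟨hα, -⟩ | hα))
  · exact .inl (.inl (.inl hα))
  · exact .inr (.inl (.inl hα))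
  · exact .inl (.inl (.inr hα))
  · exact .inr (.inr hα)
  · exact .inl (.inr hα)
  · exact .inr (.inl (.inr hα))

theorem Propagated.literals_subset {e : Execution At} (he : e.Propagated) {L : Set (Lit At)}
    (hadd : ∀ n : ℕ, (n : ℕ∞) < e.t → addedLiterals (e.a n) ⊆ L) {n : ℕ} (hn : (n : ℕ∞) ≤ e.t) :
    e.literals n ⊆ e.literals 0 ∪ L := by
  induction n with
  | zero => exact Set.subset_union_left
  | succ n ih =>
    have hlt : (n : ℕ∞) < e.t := lt_of_lt_of_le (by exact_mod_cast n.lt_succ_self) hn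
    exact (he.literals_succ_subset hlt).trans
      (Set.union_subset (ih hlt.le) ((hadd n hlt).trans Set.subset_union_right))

theorem a_subset_headUnits {S : System At} {e : Execution At} (he : S.Generates e) {n : ℕ}
    (hn : (n : ℕ∞) < e.t) : e.a n ⊆ headUnits (S.rules1 ∪ S.rules2) := by
  rcases n.eq_zero_or_pos with rfl | hpos
  · simp only [a, e.a1_zero, e.a2_zero, Set.union_self, Set.empty_subset]
  obtain ⟨hodd, heven⟩ := he.2.2.2 n hpos hn
  rcases n.even_or_odd with hpar | hpar
  · obtain ⟨ha₁, ha₂ | ⟨r, hr, -, hmin⟩⟩ := heven hpar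
    · simp only [a, ha₁, ha₂, Set.union_self, Set.empty_subset]
    · simpa only [a, ha₁, Set.empty_union] using hmin.subset_headUnits (.inr hr)
  · obtain ⟨ha₂, ha₁ | ⟨r, hr, -, hmin⟩⟩ := hodd hpar
    · simp only [a, ha₁, ha₂, Set.union_self, Set.empty_subset]
    · simpa only [a, ha₂, Set.union_empty] using hmin.subset_headUnits (.inl hr)

theorem literals_subset_of_generates {S : System At} {e : Execution At} (he : S.Generates e)
    {n : ℕ} (hn : (n : ℕ∞) ≤ e.t) :
    e.literals n ⊆ e.literals 0 ∪ addedLiterals (headUnits (S.rules1 ∪ S.rules2)) :=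
  he.1.literals_subset (fun _ hm => addedLiterals_mono (a_subset_headUnits he hm)) hn

theorem finite_setOf_fsmState_of_literals_subset {L : Set (Lit At)} (hL : L.Finite) :
    {σ : FSMState At | ∃ (e : Execution At) (n : ℕ),
      e.literals n ⊆ L ∧ σ = e.fsmState n}.Finite := by
  refine ((Set.finite_Iic 2).prod
    (hL.powerset.prod (hL.powerset.prod hL.powerset))).subset ?_
  rintro _ ⟨e, n, hsub, rfl⟩
  simp only [literals, Set.union_subset_iff] at hsub
  obtain ⟨⟨hs₁, hp⟩, hs₂⟩ := hsub
  exact ⟨ylabel_le_two e.t n, hs₁, hp, hs₂⟩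

end Execution

end

/-- finiteness of the representing machine. If the rule sets are
finite and the initial state has finite components, then every literal occurring
in a private or public state of any generated execution lies in the finite set
consisting of the initial literals together with the literals added (⊕ or ⊞) in
the head of some rule; consequently the state set of the representing machine is
finite. -/
theorem representing_machine_finite {At : Type u} (S : System At)
    (h1 : S.rules1.Finite) (h2 : S.rules2.Finite)
    (s10 p0 s20 : Set (Lit At))
    (hs1 : s10.Finite) (hp0 : p0.Finite) (hs2 : s20.Finite)
    (hI : ((s10, (∅ : Set (ActionUnit At)), p0, (∅ : Set (ActionUnit At)), s20) :
        ExecState At) ∈ S.initials) :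
    (s10 ∪ p0 ∪ s20 ∪
      {α : Lit At | ∃ r ∈ S.rules1 ∪ S.rules2,
        ActionUnit.addPriv α ∈ r.head.units ∨ ActionUnit.addPub α ∈ r.head.units}).Finite ∧
    (∀ e : Execution At, S.Generates e →
      e.state 0 = (s10, (∅ : Set (ActionUnit At)), p0, (∅ : Set (ActionUnit At)), s20) →
      ∀ n : ℕ, (n : ℕ∞) ≤ e.t →
        e.s1 n ∪ e.p n ∪ e.s2 n ⊆
          s10 ∪ p0 ∪ s20 ∪
            {α : Lit At | ∃ r ∈ S.rules1 ∪ S.rules2,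
              ActionUnit.addPriv α ∈ r.head.units ∨
                ActionUnit.addPub α ∈ r.head.units}) ∧
    Set.Finite {σ : FSMState At | ∃ e : Execution At, S.Generates e ∧
      e.state 0 = (s10, (∅ : Set (ActionUnit At)), p0, (∅ : Set (ActionUnit At)), s20) ∧
      ∃ n : ℕ, (n : ℕ∞) ≤ e.t ∧ σ = e.fsmState n} := by
  rw [← addedLiterals_headUnits]
  have hL : (s10 ∪ p0 ∪ s20 ∪ addedLiterals (headUnits (S.rules1 ∪ S.rules2))).Finite :=
    ((hs1.union hp0).union hs2).union (finite_addedLiterals (finite_headUnits (h1.union h2)))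
  have hsub (e : Execution At) (he : S.Generates e) (h0 : e.state 0 = (s10, ∅, p0, ∅, s20))
      (n : ℕ) (hn : (n : ℕ∞) ≤ e.t) :
      e.literals n ⊆ s10 ∪ p0 ∪ s20 ∪ addedLiterals (headUnits (S.rules1 ∪ S.rules2)) :=
    Execution.literals_eq_of_state_eq h0 ▸ Execution.literals_subset_of_generates he hn
  refine ⟨hL, hsub, (Execution.finite_setOf_fsmState_of_literals_subset hL).subset ?_⟩
  rintro _ ⟨e, he, h0, n, hn, rfl⟩
  exact ⟨e, n, hsub e he h0 n hn, rfl⟩
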